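/- arXiv:1204.6692 — 3 statements merged into one kernel-verified Lean document; each statement's English description precedes it below -/
import Mathlib

section
/- Let f_0 ∈ F_2[x] be any monic irreducible polynomial of degree n ≥ 1, and write n = 2^l · m with m odd and l ≥ 0. Then there exist an integer s with 0 ≤ s ≤ l+3 and an infinite sequence (f_i)_{i ≥ 0} of monic irreducible polynomials in F_2[x], starting from the given f_0, such that f_{i+1} divides f_i^Q for every i ≥ 0, and for every i ≥ s one has f_{i+1} = f_i^Q, so that deg f_{i+1} = 2 · deg f_i for all i ≥ s. -/
open Polynomial

noncomputable def Qtrans (f : Polynomial (ZMod 2)) : Polynomial (ZMod 2) :=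
  ∑ i ∈ Finset.range (f.natDegree + 1),
    C (f.coeff i) * X ^ (f.natDegree - i) * (X ^ 2 + 1) ^ i

abbrev Om := AlgebraicClosure (ZMod 2)

instance instCharPOm : CharP Om 2 := charP_of_injective_algebraMap (algebraMap (ZMod 2) Om).injective 2

noncomputable def dg (x : Om) : ℕ := (minpoly (ZMod 2) x).natDegree

lemma Om_int (x : Om) : IsIntegral (ZMod 2) x := Algebra.IsIntegral.isIntegral x

lemma fix_iff (x : Om) (n : ℕ) : x ^ 2 ^ n = x ↔ dg x ∣ n := by
  have h := (minpoly.irreducible (Om_int x)).natDegree_dvd_iff_dvd_X_pow_card_pow_sub_X (n := n)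
  unfold dg
  rw [h, minpoly.dvd_iff]
  simp [sub_eq_zero]

lemma dg_pos (x : Om) : 0 < dg x := minpoly.natDegree_pos (Om_int x)

lemma two0 : (2 : Om) = 0 := CharTwo.two_eq_zero

lemma dbl (x : Om) : x + x = 0 := CharTwo.add_self_eq_zero x

noncomputable def T (n : ℕ) (x : Om) : Om := ∑ i ∈ Finset.range n, x ^ 2 ^ i

lemma T_succ (n : ℕ) (x : Om) : T (n + 1) x = T n x + x ^ 2 ^ n := Finset.sum_range_succ _ _

lemma T_zero (n : ℕ) : T n 0 = 0 := by
  unfold T; apply Finset.sum_eq_zero; intro i _; simp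

lemma T_addn (n : ℕ) (x y : Om) : T n (x + y) = T n x + T n y := by
  unfold T; rw [← Finset.sum_add_distrib]
  refine Finset.sum_congr rfl fun i _ => ?_
  exact add_pow_char_pow x y 2 i

lemma T_split (a b : ℕ) (x : Om) : T (a + b) x = T a x + T b (x ^ 2 ^ a) := by
  unfold T; rw [Finset.sum_range_add]
  congr 1
  refine Finset.sum_congr rfl fun i _ => ?_
  rw [← pow_mul, pow_add]

lemma T_sq (n : ℕ) (x : Om) : T n (x ^ 2) = (T n x) ^ 2 := by
  unfold T; rw [sum_pow_char (p := 2)]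
  refine Finset.sum_congr rfl fun i _ => ?_
  rw [← pow_mul, ← pow_mul, mul_comm]

lemma AS (z c : Om) (h : z ^ 2 + z = c) (k : ℕ) : z ^ 2 ^ k = z + T k c := by
  induction k with
  | zero => simp [T]
  | succ k ih =>
    have h2 : z ^ 2 = z + c := by linear_combination h - z * two0
    rw [pow_succ', pow_mul, h2, add_pow_char_pow (p := 2), ih, T_succ]; ring

lemma T_idem (n : ℕ) (x : Om) (hx : x ^ 2 ^ n = x) : T n (x ^ 2) = T n x := by
  have h1 := T_split 1 n x
  have h2 := T_succ n x
  rw [add_comm 1 n] at h1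
  have h3 : T 1 x = x := by simp [T]
  rw [h3, pow_one] at h1
  rw [hx] at h2
  linear_combination h2 - h1

lemma T_01 (n : ℕ) (x : Om) (hx : x ^ 2 ^ n = x) : T n x = 0 ∨ T n x = 1 := by
  have h := T_idem n x hx
  rw [T_sq] at h
  have : T n x * (T n x - 1) = 0 := by linear_combination h
  rcases mul_eq_zero.1 this with h | h
  · exact Or.inl h
  · exact Or.inr (by linear_combination h)

lemma inv_fix {n : ℕ} {x : Om} (hx : x ^ 2 ^ n = x) : x⁻¹ ^ 2 ^ n = x⁻¹ := by
  rw [inv_pow, hx]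

lemma fix_mul {d : ℕ} {x : Om} (hx : x ^ 2 ^ d = x) (c : ℕ) : x ^ 2 ^ (d * c) = x := by
  rw [fix_iff] at *; exact hx.mul_right c

lemma T_mul (d c : ℕ) (x : Om) (hx : x ^ 2 ^ d = x) : T (d * c) x = c * T d x := by
  induction c with
  | zero => simp [T]
  | succ c ih =>
    rw [mul_add, mul_one, T_split, ih, fix_mul hx]; push_cast; ring

lemma T_dg {n : ℕ} {x : Om} (hx : x ^ 2 ^ n = x) (h : T n x = 1) : T (dg x) x = 1 := by
  obtain ⟨c, rfl⟩ := (fix_iff x n).1 hx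
  have hf := (fix_iff x (dg x)).2 dvd_rfl
  rw [T_mul _ _ _ hf] at h
  rcases T_01 _ x hf with h0 | h0
  · rw [h0] at h; simp at h
  · exact h0

lemma dg_inv (x : Om) : dg x⁻¹ = dg x := by
  apply Nat.dvd_antisymm
  · rw [← fix_iff]; exact inv_fix ((fix_iff x _).2 dvd_rfl)
  · rw [← fix_iff]
    have := inv_fix ((fix_iff x⁻¹ _).2 dvd_rfl)
    simpa using this

noncomputable def th (x : Om) : Om := x + x⁻¹

lemma th_inv (x : Om) : th x⁻¹ = th x := by simp [th, add_comm]

lemma th_zero : th 0 = 0 := by simp [th]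

lemma th_fix {n : ℕ} {x : Om} (hx : x ^ 2 ^ n = x) : (th x) ^ 2 ^ n = th x := by
  unfold th; rw [add_pow_char_pow (p := 2), inv_fix hx, hx]

lemma pre (x : Om) : ∃ y : Om, y ≠ 0 ∧ th y = x := by
  have hd : (X ^ 2 + C x * X + 1 : Om[X]).degree = 2 := by
    have := degree_quadratic (R := Om) (a := 1) (b := x) (c := 1) one_ne_zero
    simpa using this
  obtain ⟨y, hy⟩ := IsAlgClosed.exists_root (X ^ 2 + C x * X + 1 : Om[X]) (by rw [hd]; decide)
  simp [IsRoot] at hy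
  have hy0 : y ≠ 0 := by rintro rfl; simp at hy
  refine ⟨y, hy0, ?_⟩
  unfold th
  field_simp
  linear_combination hy - x * y * two0

/-- key Frobenius computation -/
lemma pre_frob {n : ℕ} {x y : Om} (hx : x ^ 2 ^ n = x) (hx0 : x ≠ 0) (hy : y ≠ 0)
    (h : th y = x) : y ^ 2 ^ n = y + x * T n x⁻¹ := by
  have hq : y ^ 2 + 1 = x * y := by rw [← h]; unfold th; field_simp
  have hz : (y / x) ^ 2 + y / x = (x⁻¹) ^ 2 := by
    field_simp
    linear_combination hq + (x * y - 1) * two0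
  have h2 := AS _ _ hz n
  rw [T_idem n _ (inv_fix hx), div_pow, hx] at h2
  rw [div_eq_iff hx0] at h2
  rw [h2]; field_simp

lemma pre_frob0 {n : ℕ} {x y : Om} (hx : x ^ 2 ^ n = x) (hx0 : x ≠ 0) (hy : y ≠ 0)
    (h : th y = x) (ht : T n x⁻¹ = 0) : y ^ 2 ^ n = y := by
  rw [pre_frob hx hx0 hy h, ht]; ring

lemma pre_frob1 {n : ℕ} {x y : Om} (hx : x ^ 2 ^ n = x) (hx0 : x ≠ 0) (hy : y ≠ 0)
    (h : th y = x) (ht : T n x⁻¹ = 1) : y ^ 2 ^ n = y⁻¹ := by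
  rw [pre_frob hx hx0 hy h, ht, ← h]; unfold th; linear_combination dbl y

lemma T_th (n : ℕ) (y : Om) : T n (th y) = T n y + T n y⁻¹ := T_addn _ _ _

/-- good elements -/
def G (x : Om) : Prop := x ≠ 0 ∧ T (dg x) x = 1 ∧ T (dg x) x⁻¹ = 1

lemma G_of {n : ℕ} {x : Om} (hx : x ^ 2 ^ n = x) (h1 : T n x = 1) (h2 : T n x⁻¹ = 1) : G x := by
  refine ⟨?_, T_dg hx h1, ?_⟩
  · rintro rfl; rw [T_zero] at h1; exact zero_ne_one h1
  · have := T_dg (inv_fix hx) h2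
    rwa [dg_inv] at this

lemma pre_double {n : ℕ} {x y : Om} (hx : x ^ 2 ^ n = x) (hx0 : x ≠ 0) (hy : y ≠ 0)
    (h : th y = x) (ht : T n x⁻¹ = 1) : y ^ 2 ^ (n + n) = y ∧ T (n + n) y = T n x ∧
      T (n + n) y⁻¹ = T n x := by
  have h1 := pre_frob1 hx hx0 hy h ht
  refine ⟨?_, ?_, ?_⟩
  · rw [pow_add, pow_mul, h1, inv_pow, h1, inv_inv]
  · rw [T_split, h1, ← h, T_th]
  · rw [T_split, inv_pow, h1, inv_inv, ← h, T_th]; ring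

lemma G_step {x y : Om} (hG : G x) (hy : y ≠ 0) (h : th y = x) : G y ∧ dg y = 2 * dg x := by
  obtain ⟨hx0, h1, h2⟩ := hG
  have hf := (fix_iff x (dg x)).2 dvd_rfl
  obtain ⟨a, b, c⟩ := pre_double hf hx0 hy h h2
  refine ⟨G_of a (b.trans h1) (c.trans h1), ?_⟩
  have hdvd : dg x ∣ dg y := by
    rw [← fix_iff, ← h]; exact th_fix ((fix_iff y _).2 dvd_rfl)
  obtain ⟨k, hk⟩ := hdvd
  have h3 : dg y ∣ dg x * 2 := by rw [mul_two]; exact (fix_iff _ _).1 a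
  rw [hk] at h3
  have h4 : k ∣ 2 := Nat.dvd_of_mul_dvd_mul_left (dg_pos x) h3
  rcases (Nat.dvd_prime Nat.prime_two).1 h4 with rfl | rfl
  · exfalso
    have h5 : y ^ 2 ^ (dg x) = y := by rw [fix_iff, hk, mul_one]
    have h6 := pre_frob1 hf hx0 hy h h2
    rw [h5] at h6
    apply hx0
    rw [← h, th, ← h6, dbl]
  · rw [hk, mul_comm]

lemma th_eq_zero {u : Om} (hu : u ≠ 0) (h : th u = 0) : u = 1 := by
  unfold th at h
  field_simp at h
  have : (u + 1) ^ 2 = 0 := by linear_combination h + u * two0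
  have h2 := pow_eq_zero_iff (two_ne_zero) |>.1 this
  linear_combination h2 - two0

lemma dg_one : dg 1 = 1 := by
  have : dg 1 ∣ 1 := (fix_iff 1 1).1 (by simp)
  exact Nat.dvd_one.1 this

lemma G_one : G 1 := by
  apply G_of (n := 1) <;> simp [T]

def Lv : ℕ → Om → Prop
  | 0, u => u = 0
  | k + 1, u => u ≠ 0 ∧ Lv k (th u)

lemma Lv_deg (k : ℕ) : ∀ u, Lv (k + 1) u → G u ∧ dg u = 2 ^ k := by
  induction k with
  | zero =>
    rintro u ⟨h0, h⟩
    have := th_eq_zero h0 h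
    subst this
    exact ⟨G_one, by simpa using dg_one⟩
  | succ k ih =>
    rintro u ⟨h0, h⟩
    obtain ⟨a, b⟩ := ih _ h
    obtain ⟨c, d⟩ := G_step a h0 rfl
    exact ⟨c, by rw [d, b, pow_succ']⟩

lemma add_ne {x y : Om} (h : x ≠ y) : x + y ≠ 0 := by
  intro h2; apply h; linear_combination h2 - y * two0

lemma th_eq_iff {x y : Om} (hx : x ≠ 0) (hy : y ≠ 0) (h : th x = th y) : x = y ∨ x * y = 1 := by
  unfold th at h
  field_simp at h
  have : (x - y) * (x * y - 1) = 0 := by linear_combination h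
  rcases mul_eq_zero.1 this with h | h
  · left; linear_combination h
  · right; linear_combination h

lemma iter_zero (k : ℕ) : th^[k] 0 = 0 := by
  induction k with
  | zero => rfl
  | succ k ih => rw [Function.iterate_succ_apply, th_zero, ih]

lemma pair_step {u v x y : Om} (hx : x ≠ 0) (hy : y ≠ 0) (hu : u ≠ 0) (hv : v ≠ 0)
    (hne : x + y ≠ 0) (hxy : x * y + 1 ≠ 0)
    (h1 : (u + v) * (x + y) ^ 2 = x * y) (h2 : u * v * (x + y) ^ 2 = x ^ 2 * y ^ 2 + 1) :
    (th u + th v) * (th x + th y) ^ 2 = th x * th y ∧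
    th u * th v * (th x + th y) ^ 2 = th x ^ 2 * th y ^ 2 + 1 := by
  have hs : (x + y) ^ 2 ≠ 0 := pow_ne_zero _ hne
  have hp : u * v = (x * y + 1) ^ 2 / (x + y) ^ 2 := by
    field_simp
    linear_combination h2 - x * y * two0
  have hq : u + v = x * y / (x + y) ^ 2 := by
    field_simp
    linear_combination h1
  have hc : th x + th y = (x + y) * (x * y + 1) / (x * y) := by
    unfold th; field_simp; ring
  have e1 : th u + th v = (u + v) * (u * v + 1) / (u * v) := by
    unfold th; field_simp; ring
  have e2 : th u * th v = ((u * v + 1) ^ 2 + (u + v) ^ 2) / (u * v) := by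
    unfold th; field_simp; linear_combination -2 * u * v * two0
  have e3 : th x * th y = ((x * y + 1) ^ 2 + (x + y) ^ 2) / (x * y) := by
    unfold th; field_simp; linear_combination -2 * x * y * two0
  constructor
  · rw [e1, hc, e3, hp, hq]
    field_simp
  · rw [← mul_pow, e2, hc, e3, hp, hq]
    field_simp

lemma pair_iter (k : ℕ) : ∀ u v x y : Om, th^[k] x ≠ th^[k] y → th^[k + 1] x = th^[k + 1] y →
    th^[k + 1] x ≠ 0 →
    (u + v) * (x + y) ^ 2 = x * y → u * v * (x + y) ^ 2 = x ^ 2 * y ^ 2 + 1 →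
    Lv k u ∨ Lv k v := by
  induction k with
  | zero =>
    intro u v x y h1 h2 h3 h4 h5
    have hx : x ≠ 0 := by rintro rfl; exact h3 (iter_zero _)
    have hy : y ≠ 0 := by rintro rfl; exact h3 (h2.trans (iter_zero _))
    rcases th_eq_iff hx hy h2 with h | h
    · exact absurd h h1
    · have : u * v * (x + y) ^ 2 = 0 := by
        rw [h5]; linear_combination (x * y + 1) * h + two0
      rcases mul_eq_zero.1 this with h | h
      · exact mul_eq_zero.1 h
      · exact absurd h (pow_ne_zero _ (add_ne h1))
  | succ k ih =>
    intro u v x y h1 h2 h3 h4 h5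
    have hx : x ≠ 0 := by rintro rfl; exact h3 (iter_zero _)
    have hy : y ≠ 0 := by rintro rfl; exact h3 (h2.trans (iter_zero _))
    have hne : x ≠ y := by rintro rfl; exact h1 rfl
    have hth : th x ≠ th y := by
      intro h; apply h1; rw [Function.iterate_succ_apply, Function.iterate_succ_apply, h]
    have hxy : x * y + 1 ≠ 0 := by
      intro h
      apply hth
      have : y = x⁻¹ := by
        apply eq_inv_of_mul_eq_one_right; linear_combination h - two0
      rw [this, th_inv]
    have huv : u * v * (x + y) ^ 2 ≠ 0 := by
      rw [h5]
      have := pow_ne_zero 2 hxy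
      intro h; apply this; linear_combination h + x * y * two0
    have huv' := left_ne_zero_of_mul huv
    have hu := left_ne_zero_of_mul huv'
    have hv := right_ne_zero_of_mul huv'
    obtain ⟨a, b⟩ := pair_step hx hy hu hv (add_ne hne) hxy h4 h5
    rcases ih (th u) (th v) (th x) (th y) h1 h2 h3 a b with h | h
    · exact Or.inl ⟨hu, h⟩
    · exact Or.inr ⟨hv, h⟩

/-- elements of `F_{2^n}` with equal traces -/
def E (n : ℕ) (x : Om) : Prop := x ^ 2 ^ n = x ∧ T n x = T n x⁻¹

lemma pair_exists {n : ℕ} {x y : Om} (hx : x ≠ 0) (hy : y ≠ 0) (hne : x ≠ y)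
    (hEx : E n x) (hEy : E n y) : ∃ u v : Om, u ^ 2 ^ n = u ∧ v ^ 2 ^ n = v ∧
    (u + v) * (x + y) ^ 2 = x * y ∧ u * v * (x + y) ^ 2 = x ^ 2 * y ^ 2 + 1 := by
  have hs := add_ne hne
  have hc : T n (th x + th y) = 0 := by
    rw [T_addn, T_th, T_th, hEx.2, hEy.2, dbl, dbl, add_zero]
  have hfx : (x + y) ^ 2 ^ n = x + y := by
    rw [add_pow_char_pow (p := 2), hEx.1, hEy.1]
  have hd : (X ^ 2 + X + C ((th x + th y) ^ 2) : Om[X]).degree = 2 := by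
    have := degree_quadratic (R := Om) (a := 1) (b := 1) (c := (th x + th y) ^ 2) one_ne_zero
    simpa only [map_one, one_mul] using this
  obtain ⟨w, hw⟩ := IsAlgClosed.exists_root _ (by rw [hd]; decide)
  simp only [IsRoot, eval_add, eval_pow, eval_X, eval_C] at hw
  have hw' : w ^ 2 + w = (th x + th y) ^ 2 := by
    linear_combination hw - (th x + th y) ^ 2 * two0
  have hwf := AS _ _ hw' n
  rw [T_sq, hc, zero_pow two_ne_zero, add_zero] at hwf
  have hE : th x + th y = (x + y) * (x * y + 1) / (x * y) := by
    unfold th; field_simp; ring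
  rw [hE] at hw'
  field_simp at hw'
  refine ⟨w * (x * y) / (x + y) ^ 2, (w + 1) * (x * y) / (x + y) ^ 2, ?_, ?_, ?_, ?_⟩
  · rw [div_pow, mul_pow, mul_pow, hwf, hEx.1, hEy.1, pow_right_comm, hfx]
  · rw [div_pow, mul_pow, mul_pow, add_pow_char_pow (p := 2), hwf, hEx.1, hEy.1, pow_right_comm,
      hfx, one_pow]
  · field_simp
    linear_combination w * two0
  · field_simp
    linear_combination hw' + x * y * (x + y) ^ 2 * two0

lemma bound {n k : ℕ} {x y : Om} (hEx : E n x) (hEy : E n y)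
    (h1 : th^[k + 1] x ≠ th^[k + 1] y) (h2 : th^[k + 2] x = th^[k + 2] y)
    (h3 : th^[k + 2] x ≠ 0) : 2 ^ k ∣ n := by
  have hx : x ≠ 0 := by rintro rfl; exact h3 (iter_zero _)
  have hy : y ≠ 0 := by rintro rfl; exact h3 (h2.trans (iter_zero _))
  have hne : x ≠ y := by rintro rfl; exact h1 rfl
  obtain ⟨u, v, hu, hv, a, b⟩ := pair_exists hx hy hne hEx hEy
  rcases pair_iter (k + 1) u v x y h1 h2 h3 a b with h | h
  · rw [← (Lv_deg k u h).2, ← fix_iff]; exact hu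
  · rw [← (Lv_deg k v h).2, ← fix_iff]; exact hv

def Reach : ℕ → Om → Prop
  | 0, x => G x
  | k + 1, x => ∃ y, y ≠ 0 ∧ th y = x ∧ Reach k y

def S (n : ℕ) (x : Om) : Prop := x ≠ 0 ∧ x ^ 2 ^ n = x ∧ T n x = 0 ∧ T n x⁻¹ = 0

lemma S_E {n : ℕ} {x : Om} (h : S n x) : E n x := ⟨h.2.1, h.2.2.1.trans h.2.2.2.symm⟩

lemma S_step {n : ℕ} {x y : Om} (h : S n x) (hy : y ≠ 0) (hxy : th y = x) :
    E n y ∧ (S n y ∨ G y) := by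
  obtain ⟨h0, h1, h2, h3⟩ := h
  have hf := pre_frob0 h1 h0 hy hxy h3
  have ht : T n y = T n y⁻¹ := by
    rw [← hxy, T_th] at h2
    linear_combination h2 - T n y⁻¹ * two0
  refine ⟨⟨hf, ht⟩, ?_⟩
  rcases T_01 n y hf with h | h
  · exact Or.inl ⟨hy, hf, h, ht ▸ h⟩
  · exact Or.inr (G_of hf h (ht ▸ h))

lemma S_chain {n : ℕ} (k : ℕ) : ∀ y : Om, S n y → (∀ j ≤ k, ¬ Reach j y) →
    ∃ z, E n z ∧ th^[k + 1] z = y := by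
  induction k with
  | zero =>
    intro y hy _
    obtain ⟨z, hz, h⟩ := pre y
    exact ⟨z, (S_step hy hz h).1, h⟩
  | succ k ih =>
    intro y hy hR
    obtain ⟨z, hz, h⟩ := pre y
    rcases (S_step hy hz h).2 with hS | hG
    · obtain ⟨w, hw, hw2⟩ := ih z hS (fun j hj hr => hR (j + 1) (by omega) ⟨z, hz, h, hr⟩)
      exact ⟨w, hw, by rw [Function.iterate_succ_apply', hw2, h]⟩
    · exact absurd ⟨z, hz, h, hG⟩ (hR 1 (by omega))

lemma ne_inv {x y : Om} (hx : x ≠ 0) (h : th y = x) : y ≠ y⁻¹ := by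
  intro h2; apply hx; rw [← h, th, ← h2, dbl]

lemma F1 {n l : ℕ} (hn : ¬ 2 ^ (l + 1) ∣ n) {x : Om} (h : S n x) : ∃ s ≤ l + 2, Reach s x := by
  obtain ⟨y, hy, hyx⟩ := pre x
  have hyi : th y⁻¹ = x := by rw [th_inv, hyx]
  have hy' := inv_ne_zero hy
  rcases (S_step h hy hyx).2 with h1 | h1
  swap
  · exact ⟨1, by omega, y, hy, hyx, h1⟩
  rcases (S_step h hy' hyi).2 with h2 | h2
  swap
  · exact ⟨1, by omega, _, hy', hyi, h2⟩
  by_contra hcon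
  push Not at hcon
  obtain ⟨z, hz, hzy⟩ := S_chain (l + 1) y h1
    (fun j hj hr => hcon (j + 1) (by omega) ⟨y, hy, hyx, hr⟩)
  obtain ⟨w, hw, hwy⟩ := S_chain (l + 1) y⁻¹ h2
    (fun j hj hr => hcon (j + 1) (by omega) ⟨_, hy', hyi, hr⟩)
  apply hn
  have e1 : th^[l + 1 + 2] z = x := by rw [Function.iterate_succ_apply', hzy, hyx]
  have e2 : th^[l + 1 + 2] w = x := by rw [Function.iterate_succ_apply', hwy, hyi]
  apply bound (k := l + 1) hz hw
  · rw [hzy, hwy]; exact ne_inv h.1 hyx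
  · rw [e1, e2]
  · rw [e1]; exact h.1

def A (n : ℕ) (x : Om) : Prop := x ^ 2 ^ n = x ∧ T n x = 1 ∧ T n x⁻¹ = 0

lemma A_ne {n : ℕ} {x : Om} (h : A n x) : x ≠ 0 := by
  rintro rfl; have := h.2.1; rw [T_zero] at this; exact zero_ne_one this

lemma A_pre {n : ℕ} {x : Om} (h : A n x) : ∃ y, y ≠ 0 ∧ th y = x ∧ A n y := by
  obtain ⟨y, hy, hyx⟩ := pre x
  have hf := pre_frob0 h.1 (A_ne h) hy hyx h.2.2
  have ht := h.2.1
  rw [← hyx, T_th] at ht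
  rcases T_01 n y hf with h0 | h0
  · refine ⟨y⁻¹, inv_ne_zero hy, by rw [th_inv, hyx], inv_fix hf, ?_, by rwa [inv_inv]⟩
    rwa [h0, zero_add] at ht
  · refine ⟨y, hy, hyx, hf, h0, ?_⟩
    rw [h0] at ht
    linear_combination ht

lemma A_chain {n : ℕ} (k : ℕ) : ∀ x, A n x → ∃ z, A n z ∧ th^[k] z = x := by
  induction k with
  | zero => intro x hx; exact ⟨x, hx, rfl⟩
  | succ k ih =>
    intro x hx
    obtain ⟨y, _, hyx, hy⟩ := A_pre hx
    obtain ⟨z, hz, hzy⟩ := ih y hy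
    exact ⟨z, hz, by rw [Function.iterate_succ_apply', hzy, hyx]⟩

lemma T_twice {n : ℕ} {x : Om} (h : x ^ 2 ^ n = x) : T (n + n) x = 0 := by
  rw [T_split, h, dbl]

lemma A_E {n : ℕ} {x : Om} (h : A n x) : E (n + n) x := by
  refine ⟨?_, ?_⟩
  · rw [pow_add, pow_mul, h.1, h.1]
  · rw [T_twice h.1, T_twice (inv_fix h.1)]

lemma F2 {n l : ℕ} (hn : ¬ 2 ^ (l + 1) ∣ n) {b : Om} (h : A n b⁻¹) : ∃ s ≤ l + 2, Reach s b := by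
  have hb0 : b ≠ 0 := by simpa using A_ne h
  have hbf : b ^ 2 ^ n = b := by simpa using inv_fix h.1
  have hb1 : T n b = 0 := by simpa using h.2.2
  obtain ⟨c, hc, hcb⟩ := pre b
  obtain ⟨p, q, r⟩ := pre_double hbf hb0 hc hcb h.2.1
  have hS : S (n + n) c := ⟨hc, p, q.trans hb1, r.trans hb1⟩
  by_contra hcon
  push Not at hcon
  obtain ⟨z, hz, hzc⟩ := S_chain (l + 1) c hS
    (fun j hj hr => hcon (j + 1) (by omega) ⟨c, hc, hcb, hr⟩)
  obtain ⟨w, hw, hwb⟩ := A_chain (l + 3) b⁻¹ h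
  have hzb : th^[l + 3] z = b := by rw [Function.iterate_succ_apply', hzc, hcb]
  have hne : b ≠ b⁻¹ := by
    intro he
    have h1 := h.2.1
    rw [← he, hb1] at h1
    exact zero_ne_one h1
  have e1 : th^[l + 2 + 2] z = th b := by rw [Function.iterate_succ_apply', hzb]
  have e2 : th^[l + 2 + 2] w = th b := by rw [Function.iterate_succ_apply', hwb, th_inv]
  have := bound (k := l + 2) hz (A_E hw) (by rw [hzb, hwb]; exact hne) (by rw [e1, e2])
    (by
      rw [e1]; intro h0
      have := th_eq_zero hb0 h0
      rw [this] at hne; simp at hne)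
  apply hn
  rw [pow_succ, ← mul_two] at this
  exact Nat.dvd_of_mul_dvd_mul_right (by norm_num) this

lemma main_reach {l : ℕ} (x : Om) (hn : ¬ 2 ^ (l + 1) ∣ dg x) : ∃ s ≤ l + 3, Reach s x := by
  by_cases hx : x = 0
  · subst hx
    exact ⟨1, by omega, 1, one_ne_zero, by simp [th, dbl], G_one⟩
  have hf := (fix_iff x _).2 dvd_rfl
  rcases T_01 _ x hf with h1 | h1 <;> rcases T_01 _ _ (inv_fix hf) with h2 | h2
  · obtain ⟨s, hs, h⟩ := F1 hn ⟨hx, hf, h1, h2⟩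
    exact ⟨s, by omega, h⟩
  · obtain ⟨s, hs, h⟩ := F2 (b := x) hn ⟨inv_fix hf, h2, by rwa [inv_inv]⟩
    exact ⟨s, by omega, h⟩
  · obtain ⟨y, hy, hyx, hA⟩ := A_pre (x := x) ⟨hf, h1, h2⟩
    obtain ⟨s, hs, h⟩ := F2 (b := y⁻¹) hn (by rwa [inv_inv])
    exact ⟨s + 1, by omega, y⁻¹, inv_ne_zero hy, by rw [th_inv, hyx], h⟩
  · exact ⟨0, by omega, hx, h1, h2⟩

lemma seq_G (x : Om) (h : G x) : ∃ a : ℕ → Om, a 0 = x ∧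
    (∀ i, a (i + 1) ≠ 0 ∧ th (a (i + 1)) = a i) ∧ ∀ i, dg (a (i + 1)) = 2 * dg (a i) := by
  choose p hp0 hp using pre
  have hs : ∀ i, p^[i + 1] x ≠ 0 ∧ th (p^[i + 1] x) = p^[i] x := by
    intro i; rw [Function.iterate_succ_apply']; exact ⟨hp0 _, hp _⟩
  have hG : ∀ i, G (p^[i] x) := by
    intro i
    induction i with
    | zero => exact h
    | succ i ih => exact (G_step ih (hs i).1 (hs i).2).1
  exact ⟨fun i => p^[i] x, rfl, hs, fun i => (G_step (hG i) (hs i).1 (hs i).2).2⟩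

lemma seq_R (s : ℕ) : ∀ x : Om, Reach s x → ∃ a : ℕ → Om, a 0 = x ∧
    (∀ i, a (i + 1) ≠ 0 ∧ th (a (i + 1)) = a i) ∧
    ∀ i, s ≤ i → dg (a (i + 1)) = 2 * dg (a i) := by
  induction s with
  | zero =>
    intro x h
    obtain ⟨a, h1, h2, h3⟩ := seq_G x h
    exact ⟨a, h1, h2, fun i _ => h3 i⟩
  | succ s ih =>
    rintro x ⟨y, hy, hyx, hR⟩
    obtain ⟨a, h1, h2, h3⟩ := ih y hR
    refine ⟨fun i => Nat.casesOn i x a, rfl, ?_, ?_⟩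
    · rintro (_ | i)
      · simp only; rw [h1]; exact ⟨hy, hyx⟩
      · exact h2 i
    · rintro (_ | i) hi
      · omega
      · exact h3 i (by omega)

lemma aeval_Q (f : (ZMod 2)[X]) (y : Om) (hy : y ≠ 0) :
    aeval y (Qtrans f) = y ^ f.natDegree * aeval (th y) f := by
  unfold Qtrans
  rw [map_sum, aeval_eq_sum_range, Finset.mul_sum]
  refine Finset.sum_congr rfl fun i hi => ?_
  have hi' : i ≤ f.natDegree := by simpa [Nat.lt_succ_iff] using hi
  have e : y ^ f.natDegree = y ^ (f.natDegree - i) * y ^ i := by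
    rw [← pow_add, Nat.sub_add_cancel hi']
  have e2 : y ^ 2 + 1 = y * th y := by unfold th; field_simp
  simp only [map_mul, map_pow, map_add, map_one, aeval_C, aeval_X, Algebra.smul_def]
  rw [e, e2, mul_pow]; ring

lemma Q_monic (f : (ZMod 2)[X]) (hf : f.Monic) :
    (Qtrans f).Monic ∧ (Qtrans f).natDegree = 2 * f.natDegree := by
  have hq : (X ^ 2 + 1 : (ZMod 2)[X]).Monic := by monicity!
  have hqd : (X ^ 2 + 1 : (ZMod 2)[X]).natDegree = 2 := by compute_degree!
  unfold Qtrans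
  rw [Finset.sum_range_succ]
  simp only [coeff_natDegree, hf.leadingCoeff, Nat.sub_self, pow_zero, map_one, one_mul]
  have hm := hq.pow f.natDegree
  have hmd : ((X ^ 2 + 1 : (ZMod 2)[X]) ^ f.natDegree).natDegree = 2 * f.natDegree := by
    rw [hq.natDegree_pow, hqd, mul_comm]
  have hlt : (∑ i ∈ Finset.range f.natDegree,
      C (f.coeff i) * X ^ (f.natDegree - i) * (X ^ 2 + 1) ^ i : (ZMod 2)[X]).degree <
      ((X ^ 2 + 1 : (ZMod 2)[X]) ^ f.natDegree).degree := by
    rw [degree_eq_natDegree hm.ne_zero, hmd]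
    rw [← mem_degreeLT]
    refine Submodule.sum_mem _ fun i hi => ?_
    rw [mem_degreeLT]
    have hi' := Finset.mem_range.1 hi
    refine lt_of_le_of_lt degree_le_natDegree ?_
    have : (C (f.coeff i) * X ^ (f.natDegree - i) * (X ^ 2 + 1) ^ i : (ZMod 2)[X]).natDegree ≤
        (f.natDegree - i) + i * 2 := by
      refine natDegree_mul_le.trans (add_le_add (natDegree_C_mul_X_pow_le _ _) ?_)
      rw [hq.natDegree_pow, hqd]
    exact_mod_cast lt_of_le_of_lt this (by omega)
  refine ⟨hm.add_of_right hlt, ?_⟩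
  rw [natDegree_add_eq_right_of_degree_lt hlt, hmd]

theorem stmt_1 (n l m : ℕ) (hn : 1 ≤ n) (hm : Odd m) (hfact : n = 2 ^ l * m)
    (f0 : Polynomial (ZMod 2)) (hmon : f0.Monic) (hirr : Irreducible f0)
    (hdeg : f0.natDegree = n) :
    ∃ (s : ℕ) (F : ℕ → Polynomial (ZMod 2)),
      s ≤ l + 3 ∧ F 0 = f0 ∧
      (∀ i, (F i).Monic ∧ Irreducible (F i)) ∧
      (∀ i, F (i + 1) ∣ Qtrans (F i)) ∧
      (∀ i, s ≤ i → F (i + 1) = Qtrans (F i)) ∧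
      (∀ i, s ≤ i → (F (i + 1)).natDegree = 2 * (F i).natDegree) := by
  obtain ⟨x, hx⟩ := IsAlgClosed.exists_aeval_eq_zero Om f0
    (degree_pos_of_irreducible hirr).ne'
  have hmin : minpoly (ZMod 2) x = f0 := (minpoly.eq_of_irreducible_of_monic hirr hx hmon).symm
  have hnd : ¬ 2 ^ (l + 1) ∣ dg x := by
    unfold dg
    rw [hmin, hdeg, hfact, pow_succ]
    intro h
    have h2 := Nat.dvd_of_mul_dvd_mul_left (by positivity) h
    exact (Nat.not_even_iff_odd.2 hm) (even_iff_two_dvd.2 h2)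
  obtain ⟨s, hs, hR⟩ := main_reach x hnd
  obtain ⟨a, h0, h1, h2⟩ := seq_R s x hR
  have hdvd : ∀ i, minpoly (ZMod 2) (a (i + 1)) ∣ Qtrans (minpoly (ZMod 2) (a i)) := by
    intro i
    apply minpoly.dvd
    rw [aeval_Q _ _ (h1 i).1, (h1 i).2, minpoly.aeval, mul_zero]
  refine ⟨s, fun i => minpoly (ZMod 2) (a i), hs, by simp only; rw [h0, hmin],
    fun i => ⟨minpoly.monic (Om_int _), minpoly.irreducible (Om_int _)⟩, hdvd, ?_, h2⟩
  intro i hi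
  obtain ⟨q1, q2⟩ := Q_monic _ (minpoly.monic (Om_int (a i)))
  have hd := h2 i hi
  unfold dg at hd
  exact Eq.symm <| eq_of_monic_of_dvd_of_natDegree_le (minpoly.monic (Om_int _)) q1 (hdvd i)
    (by rw [q2]; exact hd.ge)
end

section
/- If f ∈ F_2[x] is a monic irreducible polynomial of type (C,n) with n > 1, then there exists a monic irreducible polynomial g of degree n over F_2 of type (B,n) such that g divides f^Q and g^Q is a monic irreducible polynomial of degree 2n of type (D,2n). -/
open Polynomial

open IntermediateField Module

lemma frob2_trace {K : Type*} [Field K] [Algebra (ZMod 2) K] [FiniteDimensional (ZMod 2) K] (z : K) :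
    Algebra.trace (ZMod 2) K (z ^ 2) = Algebra.trace (ZMod 2) K z := by
  have := Algebra.trace_eq_of_algEquiv (FiniteField.frobeniusAlgEquivOfAlgebraic (ZMod 2) K) z
  rw [FiniteField.coe_frobeniusAlgEquivOfAlgebraic] at this
  simpa [ZMod.card] using this

lemma artin_schreier {K : Type*} [Field K] [Algebra (ZMod 2) K] [FiniteDimensional (ZMod 2) K] (c : K)
    (hc : Algebra.trace (ZMod 2) K c = 0) : ∃ z : K, z ^ 2 + z = c := by
  have : CharP K 2 := charP_of_injective_algebraMap (algebraMap (ZMod 2) K).injective 2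
  let φ : K →ₗ[ZMod 2] K := (FiniteField.frobeniusAlgHom (ZMod 2) K).toLinearMap + LinearMap.id
  have hφ : ∀ z, φ z = z ^ 2 + z := fun z => by
    simp [φ, ZMod.card]
  have hle : LinearMap.range φ ≤ LinearMap.ker (Algebra.trace (ZMod 2) K) := by
    rintro _ ⟨z, rfl⟩
    rw [LinearMap.mem_ker, hφ, map_add, frob2_trace, CharTwo.add_self_eq_zero]
  have h1 := φ.finrank_range_add_finrank_ker
  have h2 := (Algebra.trace (ZMod 2) K).finrank_range_add_finrank_ker
  have h3 : LinearMap.range (Algebra.trace (ZMod 2) K) = ⊤ :=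
    LinearMap.range_eq_top.2 (Algebra.trace_surjective (ZMod 2) K)
  have h4 : finrank (ZMod 2) (LinearMap.ker φ) ≤ 1 := by
    refine finrank_le_one (⟨1, ?_⟩ : LinearMap.ker φ) ?_
    · rw [LinearMap.mem_ker, hφ, one_pow, CharTwo.add_self_eq_zero]
    · rintro ⟨z, hz⟩
      rw [LinearMap.mem_ker, hφ] at hz
      have : z * (z + 1) = 0 := by linear_combination hz
      rcases mul_eq_zero.1 this with h | h
      · exact ⟨0, by subst h; simp; rfl⟩
      · refine ⟨1, ?_⟩
        rw [CharTwo.add_eq_zero] at h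
        simp [h]
  rw [h3, finrank_top, finrank_self] at h2
  have := Submodule.eq_of_le_of_finrank_le hle (by omega)
  have hc' : c ∈ LinearMap.range φ := by rw [this]; exact hc
  obtain ⟨z, hz⟩ := hc'
  exact ⟨z, by rw [← hφ, hz]⟩

lemma trace_of_root {K : Type*} [Field K] [Algebra (ZMod 2) K] [FiniteDimensional (ZMod 2) K]
    (x : K) (hx : (ZMod 2)⟮x⟯ = ⊤) (p : (ZMod 2)[X]) (hp : p.Monic)
    (hd : p.natDegree = finrank (ZMod 2) K) (h0 : aeval x p = 0) :
    p = minpoly (ZMod 2) x ∧ Algebra.trace (ZMod 2) K x = p.nextCoeff := by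
  have hi : IsIntegral (ZMod 2) x := IsIntegral.of_finite _ _
  have hd' : finrank (ZMod 2) K = (minpoly (ZMod 2) x).natDegree := by
    rw [← adjoin.finrank hi, hx, finrank_top']
  have e : p = minpoly (ZMod 2) x :=
    eq_of_monic_of_dvd_of_natDegree_le (minpoly.monic hi) hp (minpoly.dvd _ _ h0) (by omega)
  refine ⟨e, ?_⟩
  rw [trace_eq_finrank_mul_minpoly_nextCoeff, ← e, hx, IntermediateField.finrank_top]
  simp

lemma trace_inv_of_root {K : Type*} [Field K] [Algebra (ZMod 2) K] [FiniteDimensional (ZMod 2) K]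
    (x : K) (hx0 : x ≠ 0) (hx : (ZMod 2)⟮x⟯ = ⊤) (p : (ZMod 2)[X]) (hp : p.coeff 0 = 1)
    (hn : 1 ≤ p.natDegree)
    (hd : p.natDegree = finrank (ZMod 2) K) (h0 : aeval x p = 0) :
    Algebra.trace (ZMod 2) K x⁻¹ = p.coeff 1 := by
  have ht : p.natTrailingDegree = 0 := natTrailingDegree_eq_zero.2 (Or.inr (by rw [hp]; simp))
  have hx' : (ZMod 2)⟮x⁻¹⟯ = ⊤ := by
    rw [eq_top_iff, ← hx, adjoin_simple_le_iff]
    simpa using inv_mem (mem_adjoin_simple_self (ZMod 2) x⁻¹)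
  have hdr : p.reverse.natDegree = p.natDegree := by rw [reverse_natDegree, ht]; rfl
  let _ : Invertible x := invertibleOfNonzero hx0
  have hr : aeval x⁻¹ p.reverse = 0 := by
    have := (eval₂_reverse_eq_zero_iff (algebraMap (ZMod 2) K) x p).2 h0
    rwa [invOf_eq_inv] at this
  have hm : p.reverse.Monic := by
    rw [Monic, reverse_leadingCoeff, trailingCoeff, ht, hp]
  rw [(trace_of_root x⁻¹ hx' p.reverse hm (by omega) hr).2,
    nextCoeff_of_natDegree_pos (by omega), hdr, coeff_reverse, revAt_le (by omega)]
  congr 1; omega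

lemma Qtrans_aeval {L : Type*} [Field L] [Algebra (ZMod 2) L] (f : (ZMod 2)[X]) (w : L) (hw : w ≠ 0) :
    aeval w (Qtrans f) = w ^ f.natDegree * aeval (w + w⁻¹) f := by
  rw [Qtrans, map_sum, aeval_eq_sum_range, Finset.mul_sum]
  refine Finset.sum_congr rfl fun i hi => ?_
  have hi' : i ≤ f.natDegree := by simpa [Nat.lt_succ_iff] using hi
  have e : w ^ 2 + 1 = w * (w + w⁻¹) := by field_simp
  simp only [map_mul, map_pow, map_add, aeval_X, map_one, aeval_C, Algebra.smul_def]
  rw [e, mul_pow, ← Nat.sub_add_cancel hi', pow_add]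
  simp only [Nat.add_sub_cancel]
  ring

lemma sq_expand (i : ℕ) : ((X : (ZMod 2)[X]) ^ 2 + 1) ^ i = expand (ZMod 2) 2 ((X + 1) ^ i) := by
  simp

lemma Qtrans_term_deg (a : ZMod 2) (m i : ℕ) :
    (C a * X ^ m * ((X : (ZMod 2)[X]) ^ 2 + 1) ^ i).natDegree ≤ m + 2 * i := by
  have : ((X : (ZMod 2)[X]) ^ 2 + 1).natDegree ≤ 2 := by compute_degree
  refine natDegree_mul_le.trans (Nat.add_le_add (natDegree_C_mul_X_pow_le _ _) ?_)
  refine natDegree_pow_le.trans ?_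
  nlinarith

lemma Qtrans_props (g : (ZMod 2)[X]) (hg : g.Monic) (n : ℕ) (hn : 1 < n) (hd : g.natDegree = n)
    (h0 : g.coeff (n - 1) = 0) :
    (Qtrans g).Monic ∧ (Qtrans g).natDegree = 2 * n ∧
      (Qtrans g).coeff (2 * n - 1) = 0 ∧ (Qtrans g).coeff 1 = 0 := by
  obtain ⟨m, rfl⟩ : ∃ m, n = m + 1 := ⟨n - 1, by omega⟩
  have hl : g.coeff (m + 1) = 1 := by rw [← hd]; exact hg
  have h0' : g.coeff m = 0 := h0
  have e : Qtrans g = (∑ i ∈ Finset.range m,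
      C (g.coeff i) * X ^ (m + 1 - i) * (X ^ 2 + 1) ^ i) + expand (ZMod 2) 2 ((X + 1) ^ (m + 1)) := by
    rw [Qtrans, hd, Finset.sum_range_succ, Finset.sum_range_succ, h0', hl, ← sq_expand]
    simp
  have hS : ∀ k, 2 * m + 1 ≤ k → (∑ i ∈ Finset.range m,
      C (g.coeff i) * X ^ (m + 1 - i) * ((X : (ZMod 2)[X]) ^ 2 + 1) ^ i).coeff k = 0 := by
    intro k hk
    rw [finsetSum_coeff]
    refine Finset.sum_eq_zero fun i hi => coeff_eq_zero_of_natDegree_lt ?_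
    have := Qtrans_term_deg (g.coeff i) (m + 1 - i) i
    have := Finset.mem_range.1 hi
    omega
  have hle : (Qtrans g).natDegree ≤ 2 * (m + 1) := by
    rw [Qtrans, hd]
    refine natDegree_sum_le_of_forall_le _ _ fun i hi => ?_
    have := Qtrans_term_deg (g.coeff i) (m + 1 - i) i
    have := Finset.mem_range.1 hi
    omega
  have htop : (Qtrans g).coeff (2 * (m + 1)) = 1 := by
    rw [e, coeff_add, hS _ (by omega), coeff_expand_mul' (by norm_num), coeff_X_add_one_pow]
    simp
  have hmon := monic_of_natDegree_le_of_coeff_eq_one _ hle htop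
  refine ⟨hmon, le_antisymm hle (le_natDegree_of_ne_zero (by rw [htop]; simp)), ?_, ?_⟩
  · rw [e, coeff_add, hS _ (by omega), coeff_expand (by norm_num), if_neg (by omega), add_zero]
  · rw [e, coeff_add, coeff_expand (by norm_num), if_neg (by omega), add_zero, finsetSum_coeff]
    refine Finset.sum_eq_zero fun i hi => ?_
    have := Finset.mem_range.1 hi
    rw [mul_assoc, coeff_C_mul, coeff_X_pow_mul', if_neg (by omega), mul_zero]

lemma coeff_zero_one (f : (ZMod 2)[X]) (hirr : Irreducible f) (hd : 1 < f.natDegree) :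
    f.coeff 0 = 1 := by
  have h : f.coeff 0 ≠ 0 := by
    intro h
    have hr : f.IsRoot 0 := by rwa [IsRoot, ← coeff_zero_eq_eval_zero]
    have : f.natDegree = 1 := natDegree_eq_of_degree_eq_some (degree_eq_one_of_irreducible_of_root hirr hr)
    omega
  revert h; generalize f.coeff 0 = a; revert a; decide

lemma Qtrans_irred (n : ℕ) (hn : 1 < n) {K : Type*} [Field K] [Algebra (ZMod 2) K]
    [FiniteDimensional (ZMod 2) K] (hK : finrank (ZMod 2) K = n) (y : K) (hy0 : y ≠ 0)
    (hy : (ZMod 2)⟮y⟯ = ⊤)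
    (ht : Algebra.trace (ZMod 2) K y⁻¹ = 1) (hm : (Qtrans (minpoly (ZMod 2) y)).Monic)
    (hd : (Qtrans (minpoly (ZMod 2) y)).natDegree = 2 * n) :
    Irreducible (Qtrans (minpoly (ZMod 2) y)) := by
  let L := AlgebraicClosure K
  have hiy : IsIntegral (ZMod 2) y := IsIntegral.of_finite _ _
  have : CharP K 2 := charP_of_injective_algebraMap (algebraMap (ZMod 2) K).injective 2
  have : CharP L 2 := charP_of_injective_algebraMap (algebraMap (ZMod 2) L).injective 2
  obtain ⟨w, hw⟩ := IsAlgClosed.exists_root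
    (X ^ 2 + C (algebraMap K L y) * X + 1 : L[X]) (by
      have : (X ^ 2 + C (algebraMap K L y) * X + 1 : L[X]).degree = 2 := by compute_degree!
      rw [this]; norm_num)
  have hw : w ^ 2 + algebraMap K L y * w + 1 = 0 := by simpa [IsRoot] using hw
  have hw0 : w ≠ 0 := by rintro rfl; simp at hw
  have hyw : algebraMap K L y = w + w⁻¹ := by
    have : w * (algebraMap K L y + (w + w⁻¹)) = 0 := by
      rw [← hw, mul_add, mul_add, mul_inv_cancel₀ hw0]; ring
    have := (mul_eq_zero.1 this).resolve_left hw0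
    rwa [CharTwo.add_eq_zero] at this
  have hroot : aeval w (Qtrans (minpoly (ZMod 2) y)) = 0 := by
    rw [Qtrans_aeval _ _ hw0, ← hyw, aeval_algebraMap_apply, minpoly.aeval]; simp
  have hiw : IsIntegral (ZMod 2) w := ⟨_, hm, hroot⟩
  have hdvd := minpoly.dvd _ _ hroot
  have hle : (minpoly (ZMod 2) w).natDegree ≤ 2 * n := by
    rw [← hd]; exact natDegree_le_of_dvd hdvd hm.ne_zero
  have hiy' : IsIntegral (ZMod 2) (algebraMap K L y) := hiy.algebraMap
  have hny : finrank (ZMod 2) (ZMod 2)⟮algebraMap K L y⟯ = n := by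
    rw [adjoin.finrank hiy', minpoly.algebraMap_eq (algebraMap K L).injective,
      ← adjoin.finrank hiy, hy, finrank_top', hK]
  have hsub : (ZMod 2)⟮algebraMap K L y⟯ ≤ (ZMod 2)⟮w⟯ := by
    rw [adjoin_simple_le_iff, hyw]
    exact add_mem (mem_adjoin_simple_self _ w) (inv_mem (mem_adjoin_simple_self _ w))
  have hdd : n ∣ (minpoly (ZMod 2) w).natDegree := by
    rw [← hny, ← adjoin.finrank hiw]
    exact finrank_dvd_of_le_right hsub
  have hpos := minpoly.natDegree_pos hiw
  have hne : (minpoly (ZMod 2) w).natDegree ≠ n := by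
    intro h
    have : FiniteDimensional (ZMod 2) (ZMod 2)⟮w⟯ := adjoin.finiteDimensional hiw
    have heq := eq_of_le_of_finrank_eq hsub (by rw [hny, adjoin.finrank hiw, h])
    have hwm : w ∈ (ZMod 2)⟮algebraMap K L y⟯ := by rw [heq]; exact mem_adjoin_simple_self _ w
    have hr : (ZMod 2)⟮algebraMap K L y⟯ ≤ (IsScalarTower.toAlgHom (ZMod 2) K L).fieldRange := by
      rw [adjoin_simple_le_iff]; exact ⟨y, rfl⟩
    obtain ⟨v, hv⟩ := hr hwm
    have hv : algebraMap K L v = w := hv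
    have hv2 : v ^ 2 + y * v + 1 = 0 := by
      apply (algebraMap K L).injective
      simp only [map_add, map_mul, map_pow, map_one, map_zero, hv, hw]
    have h5 : (v * y⁻¹) ^ 2 + v * y⁻¹ = (y⁻¹) ^ 2 := by
      rw [← CharTwo.add_eq_zero]
      have : (v * y⁻¹) ^ 2 + v * y⁻¹ + (y⁻¹) ^ 2 = (v ^ 2 + y * v + 1) * (y⁻¹) ^ 2 := by
        field_simp
      rw [this, hv2, zero_mul]
    have h6 := congrArg (Algebra.trace (ZMod 2) K) h5
    rw [map_add, frob2_trace, frob2_trace, ht, CharTwo.add_self_eq_zero] at h6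
    exact zero_ne_one h6
  have h2n : (minpoly (ZMod 2) w).natDegree = 2 * n := by
    obtain ⟨k, hk⟩ := hdd
    rw [hk] at hle hpos hne ⊢
    have : k ≤ 2 := by nlinarith
    interval_cases k <;> omega
  rw [eq_of_monic_of_dvd_of_natDegree_le (minpoly.monic hiw) hm hdvd (by omega)]
  exact minpoly.irreducible hiw


theorem stmt_4 (n : ℕ) (hn : 1 < n) (f : Polynomial (ZMod 2))
    (hmon : f.Monic) (hirr : Irreducible f) (hdeg : f.natDegree = n)
    (hC : f.coeff (n - 1) = 1 ∧ f.coeff 1 = 0) :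
    ∃ g : Polynomial (ZMod 2),
      g.Monic ∧ Irreducible g ∧ g.natDegree = n ∧
      (g.coeff (n - 1) = 0 ∧ g.coeff 1 = 1) ∧
      g ∣ Qtrans f ∧
      (Qtrans g).Monic ∧ Irreducible (Qtrans g) ∧ (Qtrans g).natDegree = 2 * n ∧
      (Qtrans g).coeff (2 * n - 1) = 0 ∧ (Qtrans g).coeff 1 = 0 := by
  subst hdeg
  have : Fact (Irreducible f) := ⟨hirr⟩
  let K := AdjoinRoot f
  let a : K := AdjoinRoot.root f
  have : FiniteDimensional (ZMod 2) K := (AdjoinRoot.powerBasis hirr.ne_zero).finite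
  have hK : finrank (ZMod 2) K = f.natDegree := by
    rw [(AdjoinRoot.powerBasis hirr.ne_zero).finrank, AdjoinRoot.powerBasis_dim]
  have : CharP K 2 := charP_of_injective_algebraMap (algebraMap (ZMod 2) K).injective 2
  have ha : aeval a f = 0 := AdjoinRoot.eval₂_root f
  have hmin : minpoly (ZMod 2) a = f := (minpoly.eq_of_irreducible_of_monic hirr ha hmon).symm
  have hia : IsIntegral (ZMod 2) a := IsIntegral.of_finite _ _
  have hatop : (ZMod 2)⟮a⟯ = ⊤ := by
    apply eq_of_le_of_finrank_eq le_top
    rw [adjoin.finrank hia, hmin, finrank_top', hK]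
  have hf0 := coeff_zero_one f hirr hn
  have ha0 : a ≠ 0 := by
    intro h
    rw [h, ← coeff_zero_eq_aeval_zero', hf0] at ha
    simp at ha
  have hta : Algebra.trace (ZMod 2) K a = 1 := by
    rw [(trace_of_root a hatop f hmon hK.symm ha).2, nextCoeff_of_natDegree_pos (by omega), hC.1]
  have htai : Algebra.trace (ZMod 2) K a⁻¹ = 0 := by
    rw [trace_inv_of_root a ha0 hatop f hf0 (by omega) hK.symm ha, hC.2]
  obtain ⟨z, hz⟩ := artin_schreier (a⁻¹ ^ 2) (by rw [frob2_trace, htai])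
  have hz' : ∃ y : K, y ≠ 0 ∧ y + y⁻¹ = a := by
    have h1 : (a * z) ^ 2 + a * (a * z) = 1 := by
      have : (a * z) ^ 2 + a * (a * z) = a ^ 2 * (z ^ 2 + z) := by ring
      rw [this, hz, ← mul_pow, mul_inv_cancel₀ ha0, one_pow]
    have h0 : a * z ≠ 0 := by intro h; rw [h] at h1; simp at h1
    refine ⟨a * z, h0, ?_⟩
    rw [← CharTwo.add_eq_zero]
    apply mul_left_cancel₀ h0
    have : (a * z) * (a * z + (a * z)⁻¹ + a) = (a * z) ^ 2 + a * (a * z) + 1 := by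
      rw [mul_add, mul_add, mul_inv_cancel₀ h0]; ring
    rw [this, h1, mul_zero, CharTwo.add_self_eq_zero]
  have hz'' : ∃ y : K, y ≠ 0 ∧ y + y⁻¹ = a ∧ Algebra.trace (ZMod 2) K y = 0 ∧
      Algebra.trace (ZMod 2) K y⁻¹ = 1 := by
    obtain ⟨y, hy0, hy⟩ := hz'
    have hs : Algebra.trace (ZMod 2) K y + Algebra.trace (ZMod 2) K y⁻¹ = 1 := by
      rw [← map_add, hy, hta]
    have hcase : ∀ s t : ZMod 2, s + t = 1 → (s = 0 ∧ t = 1) ∨ (s = 1 ∧ t = 0) := by decide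
    rcases hcase _ _ hs with h | h
    · exact ⟨y, hy0, hy, h⟩
    · exact ⟨y⁻¹, inv_ne_zero hy0, by rw [inv_inv, add_comm, hy], h.2, by rw [inv_inv, h.1]⟩
  obtain ⟨y, hy0, hy, hty, htyi⟩ := hz''
  have hiy : IsIntegral (ZMod 2) y := IsIntegral.of_finite _ _
  have hytop : (ZMod 2)⟮y⟯ = ⊤ := by
    rw [eq_top_iff, ← hatop, adjoin_simple_le_iff, ← hy]
    exact add_mem (mem_adjoin_simple_self _ y) (inv_mem (mem_adjoin_simple_self _ y))
  have hgm := minpoly.monic hiy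
  have hgi := minpoly.irreducible hiy
  have hgd : (minpoly (ZMod 2) y).natDegree = f.natDegree := by
    rw [← adjoin.finrank hiy, hytop, finrank_top', hK]
  have hg1 : (minpoly (ZMod 2) y).coeff (f.natDegree - 1) = 0 := by
    have := (trace_of_root y hytop _ hgm (by omega) (minpoly.aeval _ _)).2
    rw [hty, nextCoeff_of_natDegree_pos (by omega), hgd] at this
    exact this.symm
  have hg2 : (minpoly (ZMod 2) y).coeff 1 = 1 := by
    rw [← trace_inv_of_root y hy0 hytop _ (coeff_zero_one _ hgi (by omega)) (by omega) (by omega)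
      (minpoly.aeval _ _), htyi]
  obtain ⟨q1, q2, q3, q4⟩ := Qtrans_props _ hgm _ hn hgd hg1
  refine ⟨minpoly (ZMod 2) y, hgm, hgi, hgd, ⟨hg1, hg2⟩, ?_, q1, ?_, q2, q3, q4⟩
  · apply minpoly.dvd
    rw [Qtrans_aeval _ _ hy0, hy, ha, mul_zero]
  · exact Qtrans_irred _ hn hK y hy0 hytop htyi q1 q2
end

section
/- Let n' ≥ 1 and write n' = 2^{l'} · m' with m' odd. Let p_0 ∈ F_2[x] be a monic irreducible polynomial of type (D,n') having a root α ∈ F_{2^{n'}} which is not θ-periodic. Then there exist an integer s' with 1 ≤ s' ≤ l'+1 and monic irreducible polynomials p_0, p_1, …, p_{s'} of degree n' over F_2 such that p_{i+1} divides p_i^Q for every 0 ≤ i < s', each p_i with i < s' is of type (D,n'), and p_{s'} is of type (A,n'). -/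
open Polynomial

/-- The map `θ(x) = x + x⁻¹` (with the convention `0⁻¹ = 0`). -/
def theta {K : Type*} [Field K] (x : K) : K := x + x⁻¹

/-- An element is `θ`-periodic if some positive iterate of `θ` fixes it. -/
def ThetaPeriodic {K : Type*} [Field K] (α : K) : Prop :=
  ∃ k : ℕ, 1 ≤ k ∧ theta^[k] α = α


theorem ring_two_pow {R : Type*} [CommRing R] (t : R) (ht : t ^ 2 = t - 2) (m : ℕ) (hm : Odd m) (l : ℕ) :
    ∃ w : R, (t - 1) ^ (2 ^ l * m) = 1 + t ^ (l + 2) * (1 + t * w) := by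
  induction l with
  | zero =>
    obtain ⟨j, rfl⟩ := hm
    have h2 : (t-1)^2 = 1 + t^3 := by grind
    have hj : ∃ u, (t - 1) ^ (2 * j) = 1 + t ^ 3 * u := by
      induction j with
      | zero => exact ⟨0, by simp⟩
      | succ j ih =>
        obtain ⟨u, hu⟩ := ih
        refine ⟨1 + u + t^3 * u, ?_⟩
        rw [mul_add, pow_add, hu]
        linear_combination (1 + t^3 * u) * h2
    obtain ⟨u, hu⟩ := hj
    refine ⟨u * (t - 1), ?_⟩
    rw [pow_zero, one_mul, pow_succ, hu]
    linear_combination -ht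
  | succ l ih =>
    obtain ⟨w, hw⟩ := ih
    refine ⟨-1 + w * (1 - t) + t ^ l * (1 + t * w) ^ 2, ?_⟩
    have : 2 ^ (l+1) * m = (2 ^ l * m) * 2 := by ring
    rw [this, pow_mul, hw]
    linear_combination ((t ^ (l + 2) * (1 + t * w))) * ht

theorem end_periodic {G : Type*} [AddCommGroup G] [Finite G] (t : AddMonoid.End G)
    (ht : t ^ 2 = t - 2) (m l : ℕ) (hm : Odd m) (h1 : (t - 1) ^ (2 ^ l * m) = 1) (P : G) :
    ∃ k : ℕ, 1 ≤ k ∧ t^[k] (t^[l + 2] P) = t^[l + 2] P := by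
  have hc : ∀ x ∈ ({t} : Set (AddMonoid.End G)), ∀ y ∈ ({t} : Set (AddMonoid.End G)), x * y = y * x := by
    intro x hx y hy
    rw [Set.mem_singleton_iff.1 hx, Set.mem_singleton_iff.1 hy]
  let S := Subring.closure ({t} : Set (AddMonoid.End G))
  have hS : IsMulCommutative S := Subring.isMulCommutative_closure hc
  let _ : CommRing S := { (inferInstance : Ring S) with mul_comm := fun x y => hS.is_comm.comm x y }
  let t' : S := ⟨t, Subring.subset_closure rfl⟩
  obtain ⟨w, hw⟩ := ring_two_pow t' (Subtype.ext ht) m hm l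
  have hw' : t ^ (l + 2) * (1 + t * (w : AddMonoid.End G)) = 0 := by
    have := congrArg (Subtype.val) hw
    have h3 : (t - 1) ^ (2 ^ l * m) = 1 + t ^ (l + 2) * (1 + t * (w : AddMonoid.End G)) := this
    rw [h1] at h3
    exact (left_eq_add.1 h3)
  have hcomm : t * (w : AddMonoid.End G) = w * t := congrArg Subtype.val (mul_comm t' w)
  have hco : Commute t (w : AddMonoid.End G) := hcomm
  have hco2 : Commute (t ^ (l+2)) (1 + t * (w : AddMonoid.End G)) :=
    ((Commute.one_right _).add_right ((Commute.refl t).mul_right hco)).pow_left _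
  set Q := t^[l + 2] P with hQ
  have hQ' : Q = (t ^ (l + 2)) P := by
    rw [hQ, AddMonoid.End.coe_pow]
  have e1 : Q + w.1 (t Q) = 0 := by
    have := DFunLike.congr_fun (hco2.eq.symm.trans hw') P
    rw [hQ', ]
    rw [hcomm] at this
    exact this
  -- two iterates agree
  have hinf : ∃ a b : ℕ, a < b ∧ t^[a] Q = t^[b] Q := by
    obtain ⟨a, b, hab, h⟩ := Finite.exists_ne_map_eq_of_infinite (fun k : ℕ => t^[k] Q)
    rcases lt_or_gt_of_ne hab with h' | h'
    · exact ⟨a, b, h', h⟩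
    · exact ⟨b, a, h', h.symm⟩
  obtain ⟨a, b, hab, h⟩ := hinf
  have key : ∀ c (d : ℕ), t^[c] (t^[d] Q) = t^[c] Q → t^[d] Q = Q := by
    intro c
    induction c with
    | zero => intro d h; exact h
    | succ c ih =>
      intro d h
      apply ih
      have hh : ∀ R : G, R = t^[c] Q ∨ R = t^[c] (t^[d] Q) → R + w.1 (t R) = 0 := by
        have : ∀ e, t^[e] Q + w.1 (t (t^[e] Q)) = 0 := by
          intro e
          have h5 : Commute (t ^ e) (w * t) := (hco.mul_right (Commute.refl t)).pow_left _
          have h6 := DFunLike.congr_fun h5.eq Q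
          rw [← AddMonoid.End.coe_pow]
          have h7 : (t ^ e) (w.1 (t Q)) = w.1 (t ((t ^ e) Q)) := h6
          rw [← h7, ← map_add, e1, map_zero]
        rintro R (rfl | rfl)
        · exact this _
        · rw [← Function.iterate_add_apply]; exact this _
      have a1 := hh _ (Or.inl rfl)
      have a2 := hh _ (Or.inr rfl)
      rw [Function.iterate_succ_apply', Function.iterate_succ_apply'] at h
      rw [h] at a2
      exact add_right_cancel (a2.trans a1.symm)
  refine ⟨b - a, by omega, key a _ ?_⟩
  rw [← Function.iterate_add_apply, h]
  congr 1
  omega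

set_option linter.unusedSectionVars false

def KW : WeierstrassCurve (ZMod 2) := ⟨1, 0, 0, 0, 1⟩

section
open WeierstrassCurve Affine
variable {K : Type*} [Field K] [Algebra (ZMod 2) K] [DecidableEq K]

abbrev KP (K : Type*) [Field K] [Algebra (ZMod 2) K] := (KW.baseChange K).toAffine.Point

theorem KW_eq (K : Type*) [Field K] [Algebra (ZMod 2) K] : KW.baseChange K = ⟨1, 0, 0, 0, 1⟩ := by
  simp [WeierstrassCurve.baseChange, KW, WeierstrassCurve.map]

theorem KW_equation (x y : K) : (KW.baseChange K).toAffine.Equation x y ↔ y ^ 2 + x * y = x ^ 3 + 1 := by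
  rw [KW_eq, Affine.equation_iff]; simp

theorem K_two (K : Type*) [Field K] [Algebra (ZMod 2) K] : (2 : K) = 0 := by
  have h : algebraMap (ZMod 2) K 2 = 0 := by
    rw [show (2 : ZMod 2) = 0 from rfl, map_zero]
  rwa [map_ofNat] at h

theorem KW_nonsingular (x y : K) (h : y ^ 2 + x * y = x ^ 3 + 1) :
    (KW.baseChange K).toAffine.Nonsingular x y := by
  rw [Affine.nonsingular_iff, KW_equation]
  refine ⟨h, ?_⟩
  rw [KW_eq]
  simp
  have := K_two K
  by_contra hcon
  grind

def frobK (K : Type*) [Field K] [Algebra (ZMod 2) K] : K →ₐ[ZMod 2] K := FiniteField.frobeniusAlgHom (ZMod 2) K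

theorem frobK_apply (x : K) : frobK K x = x ^ 2 := by simp [frobK]

noncomputable def frobE (K : Type*) [Field K] [Algebra (ZMod 2) K] [DecidableEq K] : AddMonoid.End (KP K) :=
  Affine.Point.map (W' := KW) (frobK K)

def xi : KP K → K
  | .zero => 0
  | .some x _ _ => x

theorem frobE_some (x y : K) (h) (h') : frobE K (.some x y h) = .some (x^2) (y^2) h' := by
  unfold frobE
  erw [Affine.Point.map_some]
  simp [frobK_apply]

theorem frobE_zero : frobE K (0 : KP K) = 0 := map_zero _

theorem some_congr {x y x' y' : K} (h) (hx : x = x') (hy : y = y') (h') :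
    (.some x y h : KP K) = .some x' y' h' := by
  subst hx hy; rfl

theorem phi_formula (x y : K) (h) (hx0 : x ≠ 0) :
    ∃ (y3 : K) (h3 : _), (frobE K + 1) (.some x y h) = .some (x + x⁻¹) y3 h3 ∧
      (.some x y h + .some x y h : KP K) = - frobE K (.some (x+x⁻¹) y3 h3) := by
  have h2 := K_two K
  have he : y^2 + x*y = x^3+1 := (KW_equation x y).1 h.1
  have hf : (KW.baseChange K).toAffine.Nonsingular (x^2) (y^2) := KW_nonsingular _ _ (by grind)
  have hneg : ∀ a b : K, (KW.baseChange K).toAffine.negY a b = - b - a := by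
    intro a b; rw [KW_eq]; simp [Affine.negY]
  have hadd : ∀ a b c : K, (KW.baseChange K).toAffine.addX a b c = c^2 + c - a - b := by
    intro a b c; rw [KW_eq]; simp [Affine.addX]
  have hYne : y ≠ (KW.baseChange K).toAffine.negY x y := by
    rw [hneg]; grind
  have ha : (frobE K + 1) (.some x y h) = (.some (x^2) (y^2) hf : KP K) + .some x y h := by
    rw [← frobE_some x y h hf]; rfl
  have hslope2 : (KW.baseChange K).toAffine.slope x x y y = (x^2+y)/x := by
    rw [slope_of_Y_ne rfl hYne, hneg, KW_eq]
    simp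
    rw [div_eq_div_iff]
    all_goals grind
  have hdouble : (.some x y h + .some x y h : KP K) = _ := Affine.Point.add_self_of_Y_ne hYne
  have haddY : ∀ a b c d : K, (KW.baseChange K).toAffine.addY a b c d
      = - (d * ((d^2 + d - a - b) - a) + c) - (d^2 + d - a - b) := by
    intro a b c d; rw [Affine.addY, hneg, Affine.negAddY, hadd]
  by_cases hx1 : x = 1
  · subst hx1
    have hyy : y^2 = y := by grind
    have hfp : (.some (1^2) (y^2) hf : KP K) = .some 1 y h := some_congr _ (by ring) hyy _
    have h01 : (KW.baseChange K).toAffine.Nonsingular (1 + 1⁻¹ : K) 1 := KW_nonsingular _ _ (by norm_num; grind)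
    have h01' : (KW.baseChange K).toAffine.Nonsingular ((1 + 1⁻¹ : K) ^ 2) (1 ^ 2) := KW_nonsingular _ _ (by norm_num; grind)
    have hd : (.some 1 y h + .some 1 y h : KP K) = .some (1 + 1⁻¹) 1 h01 := by
      rw [hdouble]
      apply some_congr
      · rw [hadd, hslope2]; norm_num; grind
      · rw [haddY, hslope2]; norm_num; grind
    refine ⟨1, h01, ?_, ?_⟩
    · rw [ha, hfp, hd]
    · rw [hd, frobE_some _ _ _ h01', Affine.Point.neg_some]
      apply some_congr
      · norm_num; grind
      · rw [hneg]; norm_num; grind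
  · have hne : x^2 ≠ x := by
      intro hh; apply hx1; field_simp at hh; grind
    have hx1' : x + 1 ≠ 0 := by grind
    have hslope : (KW.baseChange K).toAffine.slope (x^2) x (y^2) y = (x^2+x+1+y)/x := by
      rw [slope_of_X_ne hne, div_eq_div_iff (sub_ne_zero.2 hne) hx0]
      grind
    have hX3 : (KW.baseChange K).toAffine.addX (x^2) x ((x^2+x+1+y)/x) = x + x⁻¹ := by
      rw [hadd]; field_simp; grind
    have hX2 : (KW.baseChange K).toAffine.addX x x ((x^2+y)/x) = (x + x⁻¹)^2 := by
      rw [hadd]; field_simp; grind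
    have hs : (.some (x^2) (y^2) hf + .some x y h : KP K) = _ := Affine.Point.add_of_X_ne hne
    have h3 := nonsingular_add hf h (fun hxy => hne hxy.left)
    set y3 := (KW.baseChange K).toAffine.addY (x ^ 2) x (y ^ 2) ((KW.baseChange K).toAffine.slope (x ^ 2) x (y ^ 2) y) with hy3
    have h3' : (KW.baseChange K).toAffine.Nonsingular (x + x⁻¹) y3 := by
      rw [← hX3, ← hslope]; exact h3
    have he3 := (KW_equation _ _).1 h3'.1
    have h4 : (KW.baseChange K).toAffine.Nonsingular ((x + x⁻¹)^2) (y3^2) := KW_nonsingular _ _ (by grind)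
    refine ⟨y3, h3', ?_, ?_⟩
    · rw [ha, hs]
      apply some_congr
      · rw [hslope, hX3]
      · rfl
    · rw [hdouble, frobE_some _ _ _ h4, Affine.Point.neg_some]
      apply some_congr
      · rw [hslope2, hX2]
      · rw [hslope2, hneg, hy3, haddY, haddY, hslope]
        field_simp
        grind

theorem phi_zero (y x : K) (h) (hx : x = 0) : (frobE K + 1) (.some x y h : KP K) = 0 ∧
    (.some x y h + .some x y h : KP K) = 0 := by
  subst hx
  have h2 := K_two K
  have he : y^2 + 0*y = 0^3+1 := (KW_equation 0 y).1 h.1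
  have hy : y = 1 := by
    have : (y - 1)^2 = 0 := by grind
    have := pow_eq_zero_iff (two_ne_zero) |>.1 this
    grind
  subst hy
  have hneg : ∀ a b : K, (KW.baseChange K).toAffine.negY a b = - b - a := by
    intro a b; rw [KW_eq]; simp [Affine.negY]
  have hd : (.some 0 1 h + .some 0 1 h : KP K) = 0 :=
    Affine.Point.add_self_of_Y_eq (by rw [hneg]; grind)
  have hf : (KW.baseChange K).toAffine.Nonsingular (0^2 : K) (1^2) := KW_nonsingular _ _ (by grind)
  refine ⟨?_, hd⟩
  have ha : (frobE K + 1) (.some 0 1 h) = (.some (0^2) (1^2) hf : KP K) + .some 0 1 h := by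
    rw [← frobE_some 0 1 h hf]; rfl
  rw [ha, some_congr hf (by ring) (by ring) h, hd]

theorem xi_phi (P : KP K) : xi ((frobE K + 1) P) = theta (xi P) := by
  rcases P with _ | ⟨x, y, h⟩
  · have : (frobE K + 1) (0 : KP K) = 0 := map_zero _
    change xi ((frobE K + 1) (0 : KP K)) = theta 0
    rw [this]; simp [theta]; rfl
  · by_cases hx : x = 0
    · rw [(phi_zero y x h hx).1]
      change 0 = theta x
      simp [theta, hx]
    · obtain ⟨y3, h3, e, -⟩ := phi_formula x y h hx
      rw [e]; rfl

theorem phi_rel : (frobE K + 1) ^ 2 = (frobE K + 1) - 2 := by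
  have key : ∀ P : KP K, P + P + frobE K ((frobE K + 1) P) = 0 := by
    intro P
    rcases P with _ | ⟨x, y, h⟩
    · change (0 : KP K) + 0 + frobE K ((frobE K + 1) 0) = 0
      simp
    · by_cases hx : x = 0
      · rw [(phi_zero y x h hx).1, (phi_zero y x h hx).2]; simp
      · obtain ⟨y3, h3, e, e'⟩ := phi_formula x y h hx
        rw [e, e']; simp
  have : 2 + frobE K * (frobE K + 1) = 0 := by
    ext P
    have h2 : (2 : AddMonoid.End (KP K)) = 1 + 1 := one_add_one_eq_two.symm
    rw [h2]
    exact key P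
  have h : (frobE K + 1)^2 = (frobE K + 1) - 2 + (2 + frobE K * (frobE K + 1)) := by noncomm_ring
  rw [h, this, add_zero]

theorem frobE_pow (j : ℕ) (x y : K) (h) (h') : (frobE K ^ j) (.some x y h : KP K) = .some (x ^ 2 ^ j) (y ^ 2 ^ j) h' := by
  induction j with
  | zero => exact some_congr _ (by simp) (by simp) _
  | succ j ih =>
    have h2 := K_two K
    have : CharP K 2 := CharTwo.of_one_ne_zero_of_two_eq_zero one_ne_zero h2
    have he : y^2 + x*y = x^3+1 := (KW_equation x y).1 h.1
    have h'' : (KW.baseChange K).toAffine.Nonsingular (x ^ 2 ^ j) (y ^ 2 ^ j) := by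
      apply KW_nonsingular
      have := congrArg (fun z => z ^ 2 ^ j) he
      simp only [add_pow_char_pow, mul_pow, one_pow] at this
      rw [← pow_mul, ← pow_mul, mul_comm, pow_mul, mul_comm 3, pow_mul] at this
      exact this
    rw [pow_succ']
    change frobE K ((frobE K ^ j) _) = _
    rw [ih h'', frobE_some _ _ _ (by rw [← pow_mul, ← pow_mul]; exact h')]
    apply some_congr <;> rw [← pow_mul] <;> rfl

theorem depth_bound [Finite K] (m l : ℕ) (hm : Odd m) (hcard : Nat.card K = 2 ^ (2 ^ l * m)) (x y : K)
    (h : y^2 + x*y = x^3+1) : ThetaPeriodic (theta^[l+2] x) := by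
  have hn := KW_nonsingular x y h
  have := Fintype.ofFinite K
  have : Finite (KP K) := by
    let f : KP K → Option (K × K) := fun P => match P with
      | .zero => none
      | .some x y _ => some (x, y)
    apply Finite.of_injective f
    rintro (_ | ⟨a, b, h⟩) (_ | ⟨a', b', h'⟩) e
    · rfl
    · simp [f] at e
    · simp [f] at e
    · simp [f] at e
      exact some_congr _ e.1 e.2 _
  have hone : ((frobE K + 1) - 1) ^ (2 ^ l * m) = 1 := by
    rw [add_sub_cancel_right]
    ext P
    have hp : ∀ z : K, z ^ 2 ^ (2 ^ l * m) = z := by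
      intro z
      rw [← hcard, Nat.card_eq_fintype_card, FiniteField.pow_card]
    rcases P with _ | ⟨a, b, h⟩
    · exact map_zero _
    · rw [frobE_pow _ _ _ _ (by rw [hp, hp]; exact h)]
      exact some_congr _ (hp _) (hp _) _
  obtain ⟨k, hk, e⟩ := end_periodic (frobE K + 1) phi_rel m l hm hone (.some x y hn)
  have hit : ∀ j (P : KP K), xi ((⇑(frobE K + 1))^[j] P) = theta^[j] (xi P) := by
    intro j P
    exact Function.Semiconj.iterate_right (f := xi) (fun P => xi_phi P) j P
  refine ⟨k, hk, ?_⟩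
  have := congrArg xi e
  rw [hit, hit] at this
  exact this
end

section
variable {K : Type*} [Field K] [Algebra (ZMod 2) K] [Finite K]


theorem tr_sq (x : K) : Algebra.trace (ZMod 2) K (x ^ 2) = Algebra.trace (ZMod 2) K x := by
  have := Algebra.trace_eq_of_algEquiv (FiniteField.frobeniusAlgEquivOfAlgebraic (ZMod 2) K) x
  simpa using this

theorem hilbert90 (c : K) (hc : Algebra.trace (ZMod 2) K c = 0) : ∃ z : K, z ^ 2 + z = c := by
  have h2 : (2 : K) = 0 := K_two K
  have : CharP K 2 := CharTwo.of_one_ne_zero_of_two_eq_zero one_ne_zero h2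
  let f : K →ₗ[ZMod 2] K := (FiniteField.frobeniusAlgHom (ZMod 2) K).toLinearMap + LinearMap.id
  have hf : ∀ z, f z = z ^ 2 + z := by intro z; simp [f]
  have hle : LinearMap.range f ≤ LinearMap.ker (Algebra.trace (ZMod 2) K) := by
    rintro _ ⟨z, rfl⟩
    rw [LinearMap.mem_ker, hf, map_add, tr_sq]
    exact CharTwo.add_self_eq_zero _
  have hker : LinearMap.ker f = Submodule.span (ZMod 2) {(1 : K)} := by
    ext z
    rw [LinearMap.mem_ker, hf, Submodule.mem_span_singleton]
    constructor
    · intro h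
      have : z * (z + 1) = 0 := by linear_combination h
      rcases mul_eq_zero.1 this with h | h
      · exact ⟨0, by simp [h]⟩
      · exact ⟨1, by rw [one_smul]; linear_combination -h + h2⟩
    · rintro ⟨a, rfl⟩
      have ha : a = 0 ∨ a = 1 := by revert a; decide
      rcases ha with rfl | rfl
      · simp
      · rw [one_smul]; linear_combination h2
  have r1 := LinearMap.finrank_range_add_finrank_ker f
  have r2 := LinearMap.finrank_range_add_finrank_ker (Algebra.trace (ZMod 2) K)
  rw [hker, finrank_span_singleton one_ne_zero] at r1
  rw [LinearMap.range_eq_top.2 (Algebra.trace_surjective (ZMod 2) K), finrank_top, Module.finrank_self] at r2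
  have := Submodule.eq_of_le_of_finrank_eq hle (by omega)
  have hc' : c ∈ LinearMap.ker (Algebra.trace (ZMod 2) K) := hc
  rw [← this] at hc'
  obtain ⟨z, hz⟩ := hc'
  exact ⟨z, by rw [← hf, hz]⟩

theorem nextCoeff_minpoly (x : K) (hx : (minpoly (ZMod 2) x).natDegree = Module.finrank (ZMod 2) K) :
    (minpoly (ZMod 2) x).coeff (Module.finrank (ZMod 2) K - 1) = Algebra.trace (ZMod 2) K x := by
  have h1 := trace_eq_finrank_mul_minpoly_nextCoeff (ZMod 2) x
  rw [(Field.primitive_element_iff_minpoly_natDegree_eq (ZMod 2) x).2 hx] at h1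
  have h3 : Module.finrank (⊤ : IntermediateField (ZMod 2) K) K = 1 := IntermediateField.finrank_top
  rw [h3, nextCoeff_of_natDegree_pos (by rw [hx]; exact Module.finrank_pos), hx] at h1
  rw [h1]; simp

theorem inv_primitive (x : K) (hx : (minpoly (ZMod 2) x).natDegree = Module.finrank (ZMod 2) K) :
    (minpoly (ZMod 2) x⁻¹).natDegree = Module.finrank (ZMod 2) K := by
  rw [← Field.primitive_element_iff_minpoly_natDegree_eq, eq_top_iff] at hx ⊢
  refine hx.trans ?_
  rw [IntermediateField.adjoin_simple_le_iff]
  simpa using inv_mem (IntermediateField.mem_adjoin_simple_self (ZMod 2) x⁻¹)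

theorem theta_primitive (x : K) (hx : (minpoly (ZMod 2) (theta x)).natDegree = Module.finrank (ZMod 2) K) :
    (minpoly (ZMod 2) x).natDegree = Module.finrank (ZMod 2) K := by
  rw [← Field.primitive_element_iff_minpoly_natDegree_eq, eq_top_iff] at hx ⊢
  refine hx.trans ?_
  rw [IntermediateField.adjoin_simple_le_iff]
  have := (IntermediateField.mem_adjoin_simple_self (ZMod 2) x)
  exact add_mem this (inv_mem this)

theorem coeff_one_minpoly (x : K) (h0 : x ≠ 0) (hx : (minpoly (ZMod 2) x).natDegree = Module.finrank (ZMod 2) K) :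
    (minpoly (ZMod 2) x).coeff 1 = Algebra.trace (ZMod 2) K x⁻¹ := by
  have hi := inv_primitive x hx
  have hI : IsIntegral (ZMod 2) x⁻¹ := Algebra.IsIntegral.isIntegral _
  have hI' : IsIntegral (ZMod 2) x := Algebra.IsIntegral.isIntegral _
  set q := minpoly (ZMod 2) x⁻¹ with hq
  have hq0 : q.coeff 0 ≠ 0 := by
    rw [hq]; exact minpoly.coeff_zero_ne_zero hI (inv_ne_zero h0)
  have hq1 : q.coeff 0 = 1 := by
    generalize q.coeff 0 = a at hq0
    revert hq0; revert a; decide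
  have htr : q.natTrailingDegree = 0 := natTrailingDegree_eq_zero.2 (Or.inr hq0)
  have hmon : q.reverse.Monic := by
    rw [Monic, reverse_leadingCoeff, trailingCoeff, htr, hq1]
  have hdeg : q.reverse.natDegree = Module.finrank (ZMod 2) K := by
    rw [reverse_natDegree, htr, hi, Nat.sub_zero]
  have hroot : aeval x q.reverse = 0 := by
    let _ : Invertible x⁻¹ := invertibleOfNonzero (inv_ne_zero h0)
    have := (eval₂_reverse_eq_zero_iff (algebraMap (ZMod 2) K) x⁻¹ q).2 (minpoly.aeval _ _)
    simpa [aeval_def] using this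
  have : minpoly (ZMod 2) x = q.reverse := by
    symm
    exact eq_of_monic_of_dvd_of_natDegree_le (minpoly.monic hI') hmon (minpoly.dvd _ _ hroot) (by rw [hdeg, hx])
  rw [this, coeff_one_reverse, nextCoeff_of_natDegree_pos (by rw [hi]; exact Module.finrank_pos), hi]
  exact nextCoeff_minpoly _ hi

theorem aeval_Qtrans (f : Polynomial (ZMod 2)) (x : K) (h0 : x ≠ 0) :
    aeval x (Qtrans f) = x ^ f.natDegree * aeval (theta x) f := by
  rw [Qtrans, map_sum, aeval_eq_sum_range, Finset.mul_sum]
  refine Finset.sum_congr rfl fun i hi => ?_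
  have hi' : i ≤ f.natDegree := by simpa [Nat.lt_succ_iff] using hi
  have e : x ^ f.natDegree = x ^ (f.natDegree - i) * x ^ i := by rw [← pow_add]; congr 1; omega
  have e2 : x ^ 2 + 1 = x * theta x := by rw [theta]; field_simp
  simp only [map_mul, aeval_C, map_pow, aeval_X, map_add, map_one, Algebra.smul_def]
  rw [e2, e, mul_pow]; ring

theorem step_exists (b : K) (h0 : b ≠ 0) (hi : Algebra.trace (ZMod 2) K b⁻¹ = 0) : ∃ g : K, theta g = b := by
  obtain ⟨z, hz⟩ := hilbert90 ((b⁻¹)^2) (by rw [tr_sq, hi])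
  have h2 : (2 : K) = 0 := K_two K
  have hz0 : z ≠ 0 := by
    rintro rfl
    have : (b⁻¹)^2 = 0 := by rw [← hz]; ring
    simp [h0] at this
  refine ⟨b * z, ?_⟩
  rw [theta]
  field_simp
  field_simp at hz
  grind

end

section
variable {K : Type*} [Field K] [Algebra (ZMod 2) K] [Finite K]

def Good (b : K) : Prop := b ≠ 0 ∧ (minpoly (ZMod 2) b).natDegree = Module.finrank (ZMod 2) K ∧
  Algebra.trace (ZMod 2) K b = Algebra.trace (ZMod 2) K b⁻¹

theorem good_step (b : K) (hb : Good b) (ht : Algebra.trace (ZMod 2) K b = 0) :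
    ∃ g : K, Good g ∧ theta g = b := by
  obtain ⟨h0, hd, htr⟩ := hb
  obtain ⟨g, rfl⟩ := step_exists b h0 (by rw [← htr, ht])
  refine ⟨g, ⟨?_, theta_primitive g hd, ?_⟩, rfl⟩
  · rintro rfl
    simp [theta] at h0
  · rw [theta, map_add] at ht
    exact CharTwo.add_eq_zero.1 ht

theorem good_point (b : K) (hb : Good b) : ∃ y : K, y ^ 2 + b * y = b ^ 3 + 1 := by
  obtain ⟨h0, hd, htr⟩ := hb
  obtain ⟨z, hz⟩ := hilbert90 (b + (b⁻¹)^2) (by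
    rw [map_add, tr_sq, htr]; exact CharTwo.add_self_eq_zero _)
  refine ⟨b * z, ?_⟩
  have : (b * z)^2 + b * (b * z) = b^2 * (z^2 + z) := by ring
  rw [this, hz]
  field_simp

theorem good_chain (m l : ℕ) (hm : Odd m) (hcard : Nat.card K = 2 ^ (2 ^ l * m)) (a : K)
    (ha : Good a) (hper : ¬ ThetaPeriodic a) :
    ∃ (s : ℕ) (b : ℕ → K), s ≤ l + 1 ∧ b 0 = a ∧ (∀ i ≤ s, Good (b i)) ∧
      (∀ i < s, theta (b (i + 1)) = b i) ∧
      (∀ i < s, Algebra.trace (ZMod 2) K (b i) = 0) ∧ Algebra.trace (ZMod 2) K (b s) = 1 := by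
  classical
  have hnx : ∀ b : K, ∃ g : K, Good b ∧ Algebra.trace (ZMod 2) K b = 0 → Good g ∧ theta g = b := by
    intro b
    by_cases h : Good b ∧ Algebra.trace (ZMod 2) K b = 0
    · obtain ⟨g, hg⟩ := good_step b h.1 h.2
      exact ⟨g, fun _ => hg⟩
    · exact ⟨0, fun h' => absurd h' h⟩
  choose nx hnx using hnx
  let b : ℕ → K := fun i => nx^[i] a
  have hbs : ∀ i, b (i + 1) = nx (b i) := fun i => Function.iterate_succ_apply' _ _ _
  have hgood : ∀ s, (∀ i < s, Algebra.trace (ZMod 2) K (b i) = 0) → Good (b s) ∧ theta^[s] (b s) = a := by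
    intro s
    induction s with
    | zero => intro _; exact ⟨ha, rfl⟩
    | succ s ih =>
      intro h
      obtain ⟨h1, h2⟩ := ih (fun i hi => h i (by omega))
      obtain ⟨h3, h4⟩ := hnx (b s) ⟨h1, h s (by omega)⟩
      rw [hbs]
      refine ⟨h3, ?_⟩
      rw [Function.iterate_succ_apply, h4, h2]
  have hex : ∃ s, s ≤ l + 1 ∧ Algebra.trace (ZMod 2) K (b s) ≠ 0 := by
    by_contra hcon
    push Not at hcon
    obtain ⟨h1, h2⟩ := hgood (l + 2) (fun i hi => hcon i (by omega))
    obtain ⟨y, hy⟩ := good_point _ h1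
    apply hper
    rw [← h2]
    exact depth_bound m l hm hcard _ y hy
  have hmin : ∀ i < Nat.find hex, Algebra.trace (ZMod 2) K (b i) = 0 := by
    intro i hi
    by_contra hc
    exact Nat.find_min hex hi ⟨by have := (Nat.find_spec hex).1; omega, hc⟩
  refine ⟨Nat.find hex, b, (Nat.find_spec hex).1, rfl, ?_, ?_, hmin, ?_⟩
  · intro i hi
    exact (hgood i fun j hj => hmin j (by omega)).1
  · intro i hi
    rw [hbs]
    exact (hnx (b i) ⟨(hgood i fun j hj => hmin j (by omega)).1, hmin i hi⟩).2
  · have h := (Nat.find_spec hex).2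
    generalize Algebra.trace (ZMod 2) K (b (Nat.find hex)) = c at h
    revert h; revert c; decide

end

theorem stmt_7 (n' l' m' : ℕ) (hn : 1 ≤ n') (hm : Odd m') (hfact : n' = 2 ^ l' * m')
    (p₀ : Polynomial (ZMod 2)) (hmon : p₀.Monic) (hirr : Irreducible p₀)
    (hdeg : p₀.natDegree = n')
    (hD : p₀.coeff (n' - 1) = 0 ∧ p₀.coeff 1 = 0)
    (α : GaloisField 2 n') (hroot : Polynomial.aeval α p₀ = 0)
    (hper : ¬ ThetaPeriodic α) :
    ∃ (s' : ℕ) (P : ℕ → Polynomial (ZMod 2)),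
      1 ≤ s' ∧ s' ≤ l' + 1 ∧ P 0 = p₀ ∧
      (∀ i ≤ s', (P i).Monic ∧ Irreducible (P i) ∧ (P i).natDegree = n') ∧
      (∀ i < s', P (i + 1) ∣ Qtrans (P i)) ∧
      (∀ i < s', (P i).coeff (n' - 1) = 0 ∧ (P i).coeff 1 = 0) ∧
      ((P s').coeff (n' - 1) = 1 ∧ (P s').coeff 1 = 1) := by
  have hn0 : n' ≠ 0 := by omega
  have hfr : Module.finrank (ZMod 2) (GaloisField 2 n') = n' := GaloisField.finrank 2 hn0
  have hcard : Nat.card (GaloisField 2 n') = 2 ^ (2 ^ l' * m') := by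
    rw [GaloisField.card 2 n' hn0, ← hfact]
  have hfin : Finite (GaloisField 2 n') := inferInstance
  have hp : p₀ = minpoly (ZMod 2) α := minpoly.eq_of_irreducible_of_monic hirr hroot hmon
  have h0 : α ≠ 0 := by
    rintro rfl
    exact hper ⟨1, le_rfl, by simp [theta]⟩
  have hdα : (minpoly (ZMod 2) α).natDegree = Module.finrank (ZMod 2) (GaloisField 2 n') := by
    rw [← hp, hdeg, hfr]
  have hco : ∀ x : GaloisField 2 n', Good x → (minpoly (ZMod 2) x).coeff (n' - 1) = Algebra.trace (ZMod 2) _ x ∧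
      (minpoly (ZMod 2) x).coeff 1 = Algebra.trace (ZMod 2) _ x := by
    intro x hx
    refine ⟨?_, ?_⟩
    · have := nextCoeff_minpoly x hx.2.1
      rwa [hfr] at this
    · rw [coeff_one_minpoly x hx.1 hx.2.1, hx.2.2]
  have t1 : Algebra.trace (ZMod 2) _ α = 0 := by
    have := nextCoeff_minpoly α hdα
    rw [hfr, ← hp, hD.1] at this
    exact this.symm
  have hg : Good α := by
    refine ⟨h0, hdα, ?_⟩
    rw [t1, ← coeff_one_minpoly α h0 hdα, ← hp, hD.2]
  obtain ⟨s, b, hs, hb0, hgood, hth, htr0, htr1⟩ := good_chain m' l' hm hcard α hg hper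
  refine ⟨s, fun i => minpoly (ZMod 2) (b i), ?_, hs, ?_, ?_, ?_, ?_, ?_⟩
  · rcases Nat.eq_zero_or_pos s with rfl | h
    · rw [hb0, t1] at htr1
      exact absurd htr1 zero_ne_one
    · exact h
  · change minpoly (ZMod 2) (b 0) = p₀
    rw [hb0, hp]
  · intro i hi
    have hI : IsIntegral (ZMod 2) (b i) := Algebra.IsIntegral.isIntegral _
    exact ⟨minpoly.monic hI, minpoly.irreducible hI, by rw [(hgood i hi).2.1, hfr]⟩
  · intro i hi
    apply minpoly.dvd
    rw [aeval_Qtrans _ _ (hgood (i + 1) hi).1, hth i hi, minpoly.aeval, mul_zero]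
  · intro i hi
    have := hco (b i) (hgood i hi.le)
    rw [htr0 i hi] at this
    exact this
  · have := hco (b s) (hgood s le_rfl)
    rw [htr1] at this
    exact this
end
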